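/- arXiv:1509.04456 — 3 statements merged into one kernel-verified Lean document; each statement's English description precedes it below -/
import Mathlib

section
/- (Zalduendo's estimate) Let m ≥ 2 be an integer and let p be a real number with p > m. Then for every positive integer n and every continuous m-linear form T : ℓ_p^n × ⋯ × ℓ_p^n → 𝕂 one has (∑_{j=1}^n |T(e_j, …, e_j)|^{p/(p−m)})^{(p−m)/p} ≤ ‖T‖. -/
/-!
The mixed values `T (e_{i₀}, …, e_{i_k})` (with `m = k + 1`) are removed by averaging over signs.
Take independent signs `ε_l(j)`, `l < k`, and insert `∑ j, ε_l(j) v_{l+1,j}` in the slot `l + 1` and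
`∑ j, (∏ l, ε_l(j)) v_{0,j}` in the slot `0`.  After expanding, the index `(i₀, …, i_k)` carries the
coefficient `∏ l, ε_l(i₀) ε_l(i_{l+1})`, whose mean is `1` if all `i`'s agree and `0` otherwise, so
the mean of `T` is the diagonal sum `∑ j, T (v_{0,j}, …, v_{k,j})`
(`sum_signs_eq_diagonal`).

With `a_j = T (e_j, …, e_j)`, apply this to `v_{l,j} = |a_j|^{1/(p-m)} e_j`, with an additional
phase in the slot `0` making the diagonal sum equal to `S = ∑ j, |a_j|^{p/(p-m)}`.  All the
inserted vectors have norm at most `S^{1/p}`, whence `S ≤ ‖T‖ S^{m/p}`, which is the claim.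
-/

/-- The sign put on the `j`-th vector in the slot `l`: the product of all the signs `ε_·(j)` in
the slot `0`, and `ε_{l'}(j)` in the slot `l' + 1`. -/
def slotSign {k n : ℕ} (ε : Fin k → Fin n → ℤˣ) (l : Fin (k + 1)) (j : Fin n) : ℤˣ :=
  (Fin.cons (∏ l', ε l' j) (fun l' => ε l' j) : Fin (k + 1) → ℤˣ) l

lemma prod_slotSign {k n : ℕ} (ε : Fin k → Fin n → ℤˣ) (r : Fin (k + 1) → Fin n) :
    ∏ l, slotSign ε l (r l) = ∏ l : Fin k, (ε l (r 0) * ε l (r l.succ)) := by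
  simp [Fin.prod_univ_succ, slotSign, Finset.prod_mul_distrib]

/-- Orthogonality for a non-constant multi-index: if `r (l + 1) ≠ r 0`, flipping the single sign
`ε_l(r 0)` changes the sign of every term. -/
lemma sum_prod_slotSign_eq_zero {k n : ℕ} (r : Fin (k + 1) → Fin n) (l : Fin k)
    (hl : r l.succ ≠ r 0) :
    ∑ ε : Fin k → Fin n → ℤˣ, ((∏ l, slotSign ε l (r l) : ℤˣ) : ℤ) = 0 := by
  set δ : Fin k → Fin n → ℤˣ := Pi.mulSingle l (Pi.mulSingle (r 0) (-1)) with hδ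
  have key : ∏ l', (δ l' (r 0) * δ l' (r l'.succ)) = -1 := by
    rw [Finset.prod_eq_single l]
    · simp [hδ, Pi.mulSingle_eq_of_ne hl]
    · intro b _ hb
      simp [hδ, Pi.mulSingle_eq_of_ne hb]
    · simp
  have h := Equiv.sum_comp (Equiv.mulLeft δ)
    (fun ε : Fin k → Fin n → ℤˣ => ((∏ l, slotSign ε l (r l) : ℤˣ) : ℤ))
  have h2 : ∀ ε : Fin k → Fin n → ℤˣ,
      ((∏ l, slotSign (Equiv.mulLeft δ ε) l (r l) : ℤˣ) : ℤ)
        = -((∏ l, slotSign ε l (r l) : ℤˣ) : ℤ) := by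
    intro ε
    rw [prod_slotSign, prod_slotSign]
    have : ∏ l', ((Equiv.mulLeft δ ε) l' (r 0) * (Equiv.mulLeft δ ε) l' (r l'.succ))
        = (∏ l', (δ l' (r 0) * δ l' (r l'.succ))) * ∏ l', (ε l' (r 0) * ε l' (r l'.succ)) := by
      rw [← Finset.prod_mul_distrib]
      refine Finset.prod_congr rfl fun l' _ => ?_
      simp only [Equiv.coe_mulLeft, Pi.mul_apply]
      exact mul_mul_mul_comm _ _ _ _
    rw [this, key, neg_one_mul, Units.val_neg]
  simp only [h2, Finset.sum_neg_distrib] at h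
  linarith

lemma prod_slotSign_const {k n : ℕ} (ε : Fin k → Fin n → ℤˣ) (j : Fin n) :
    ∏ l, slotSign ε l j = 1 := by
  rw [prod_slotSign ε (fun _ => j)]
  simp

/-- The average over the signs of a multilinear form extracts its diagonal. -/
lemma sum_signs_eq_diagonal {𝕂 E : Type*} [RCLike 𝕂] [AddCommGroup E] [Module 𝕂 E] {k n : ℕ}
    (T : MultilinearMap 𝕂 (fun _ : Fin (k + 1) => E) 𝕂) (v : Fin (k + 1) → Fin n → E) :
    ∑ ε : Fin k → Fin n → ℤˣ, T (fun l => ∑ j, ((slotSign ε l j : ℤ) : 𝕂) • v l j)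
      = (Fintype.card (Fin k → Fin n → ℤˣ) : 𝕂) * ∑ j, T (fun l => v l j) := by
  classical
  have h1 : ∀ ε : Fin k → Fin n → ℤˣ,
      T (fun l => ∑ j, ((slotSign ε l j : ℤ) : 𝕂) • v l j)
        = ∑ r : Fin (k + 1) → Fin n,
          (((∏ l, slotSign ε l (r l) : ℤˣ) : ℤ) : 𝕂) * T (fun l => v l (r l)) := by
    intro ε
    rw [MultilinearMap.map_sum]
    refine Finset.sum_congr rfl fun r _ => ?_
    rw [MultilinearMap.map_smul_univ]
    simp [smul_eq_mul]
  simp only [h1]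
  rw [Finset.sum_comm]
  simp only [← Finset.sum_mul, ← Int.cast_sum]
  rw [Finset.mul_sum]
  symm
  refine Finset.sum_of_injOn (fun j _ => j) ?_ ?_ ?_ ?_
  · intro a _ b _ h
    exact congrFun h 0
  · simp
  · intro r _ hr
    have : ∃ l : Fin k, r l.succ ≠ r 0 := by
      by_contra! hc
      refine hr ⟨r 0, by simp, ?_⟩
      funext l
      refine Fin.cases rfl (fun l' => (hc l').symm) l
    obtain ⟨l, hl⟩ := this
    rw [sum_prod_slotSign_eq_zero r l hl]
    simp
  · intro j _
    simp [prod_slotSign_const]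

lemma norm_intCast_units {𝕂 : Type*} [RCLike 𝕂] (u : ℤˣ) : ‖((u : ℤ) : 𝕂)‖ = 1 := by
  rcases Int.units_eq_one_or u with rfl | rfl <;> simp

/-- Zalduendo's estimate: For `m ≥ 2`, `p > m` and every continuous
`m`-linear form `T : ℓ_p^n × ⋯ × ℓ_p^n → 𝕂`,
`(∑_{j=1}^n |T(e_j,…,e_j)|^{p/(p−m)})^{(p−m)/p} ≤ ‖T‖`. -/
theorem stmt_4 {𝕂 : Type*} [RCLike 𝕂] (m : ℕ) (hm : 2 ≤ m) (p : ℝ)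
    (hp : (m : ℝ) < p) [Fact (1 ≤ ENNReal.ofReal p)]
    (n : ℕ) (hn : 0 < n)
    (T : ContinuousMultilinearMap 𝕂
      (fun _ : Fin m => PiLp (ENNReal.ofReal p) (fun _ : Fin n => 𝕂)) 𝕂) :
    (∑ j : Fin n,
        ‖T (fun _ => (WithLp.equiv (ENNReal.ofReal p) (Fin n → 𝕂)).symm (Pi.single j 1))‖
          ^ (p / (p - (m : ℝ))))
        ^ ((p - (m : ℝ)) / p)
      ≤ ‖T‖ := by
  obtain ⟨k, rfl⟩ : ∃ k, m = k + 1 := ⟨m - 1, by omega⟩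
  have hp0 : 0 < p := lt_of_le_of_lt (Nat.cast_nonneg _) hp
  set M : ℝ := ((k + 1 : ℕ) : ℝ) with hM
  have hpM : 0 < p - M := sub_pos.2 hp
  have hpM' : p - M ≠ 0 := hpM.ne'
  set e : Fin n → PiLp (ENNReal.ofReal p) (fun _ : Fin n => 𝕂) :=
    fun j => (WithLp.equiv (ENNReal.ofReal p) (Fin n → 𝕂)).symm (Pi.single j 1) with he
  change (∑ j, ‖T (fun _ => e j)‖ ^ (p / (p - M))) ^ ((p - M) / p) ≤ ‖T‖
  set a : Fin n → 𝕂 := fun j => T (fun _ => e j) with ha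
  change (∑ j, ‖a j‖ ^ (p / (p - M))) ^ ((p - M) / p) ≤ ‖T‖
  set S : ℝ := ∑ j, ‖a j‖ ^ (p / (p - M)) with hS
  have hS0 : 0 ≤ S := Finset.sum_nonneg fun j _ => by positivity
  set c : Fin n → ℝ := fun j => ‖a j‖ ^ (1 / (p - M)) with hc
  have hc0 : ∀ j, 0 ≤ c j := fun j => by positivity
  have hcp : ∀ j, c j ^ p = ‖a j‖ ^ (p / (p - M)) := by
    intro j
    rw [hc, ← Real.rpow_mul (norm_nonneg _)]
    congr 1
    ring
  -- When `a j = 0` the phase is the junk value `0`, which only decreases norms.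
  set s : Fin n → 𝕂 := fun j => (starRingEnd 𝕂) (a j) / (‖a j‖ : 𝕂) with hs
  have hs1 : ∀ j, ‖s j‖ ≤ 1 := by
    intro j
    simp only [hs, norm_div, RCLike.norm_conj, RCLike.norm_ofReal, abs_norm]
    exact div_self_le_one _
  have hsa : ∀ j, s j * a j = (‖a j‖ : 𝕂) := by
    intro j
    by_cases h : a j = 0
    · simp [h]
    · have : (‖a j‖ : 𝕂) ≠ 0 := by simpa using h
      simp only [hs]
      rw [div_mul_eq_mul_div, RCLike.conj_mul, sq, mul_div_assoc, div_self this, mul_one]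
  set t : Fin (k + 1) → Fin n → 𝕂 :=
    fun l j => (Fin.cons (s j) (fun _ => 1) : Fin (k + 1) → 𝕂) l * (c j : 𝕂) with ht
  have htc : ∀ l j, ‖t l j‖ ≤ c j := by
    intro l j
    have h1 : ‖(Fin.cons (s j) (fun _ => 1) : Fin (k + 1) → 𝕂) l‖ ≤ 1 := by
      refine Fin.cases ?_ (fun l' => ?_) l
      · simpa using hs1 j
      · simp
    simp only [ht, norm_mul, RCLike.norm_ofReal, abs_of_nonneg (hc0 j)]
    exact mul_le_of_le_one_left (hc0 j) h1
  have hdiag : ∑ j, T (fun l => t l j • e j) = (S : 𝕂) := by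
    rw [hS, RCLike.ofReal_sum]
    refine Finset.sum_congr rfl fun j _ => ?_
    have hprod : ∏ l, t l j = s j * (c j : 𝕂) ^ (k + 1) := by
      simp [ht, Finset.prod_mul_distrib, Fin.prod_univ_succ, pow_succ]
    rw [T.map_smul_univ, hprod, smul_eq_mul]
    change s j * (c j : 𝕂) ^ (k + 1) * a j = _
    rw [mul_right_comm, hsa]
    rw [← RCLike.ofReal_pow, ← RCLike.ofReal_mul]
    congr 1
    have h2 : c j ^ (k + 1) = ‖a j‖ ^ (M / (p - M)) := by
      rw [hc, ← Real.rpow_natCast, ← Real.rpow_mul (norm_nonneg _), ← hM]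
      congr 1
      ring
    have h3 : p / (p - M) = 1 + M / (p - M) := by
      field_simp
      ring
    have hM0 : 0 ≤ M := Nat.cast_nonneg _
    rw [h2, h3, Real.rpow_add_of_nonneg (norm_nonneg _) zero_le_one (by positivity),
      Real.rpow_one]
  have hnorm : ∀ (ε : Fin k → Fin n → ℤˣ) l,
      ‖∑ j, ((slotSign ε l j : ℤ) : 𝕂) • (t l j • e j)‖ ≤ S ^ (1 / p) := by
    intro ε l
    rw [PiLp.norm_eq_sum (by rwa [ENNReal.toReal_ofReal hp0.le]), ENNReal.toReal_ofReal hp0.le]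
    refine Real.rpow_le_rpow (Finset.sum_nonneg fun j _ => by positivity) ?_ (by positivity)
    refine Finset.sum_le_sum fun i _ => ?_
    rw [← hcp]
    refine Real.rpow_le_rpow (norm_nonneg _) ?_ hp0.le
    have : (∑ j, ((slotSign ε l j : ℤ) : 𝕂) • (t l j • e j)) i
        = ((slotSign ε l i : ℤ) : 𝕂) * t l i := by
      rw [WithLp.ofLp_sum, Finset.sum_apply, Finset.sum_eq_single i]
      · simp [he]
      · intro b _ hb
        simp [he, hb.symm]
      · simp
    rw [this, norm_mul, norm_intCast_units, one_mul]
    exact htc l i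
  have hmain : S ≤ ‖T‖ * (S ^ (1 / p)) ^ (k + 1) := by
    have h1 := sum_signs_eq_diagonal T.toMultilinearMap (fun l j => t l j • e j)
    simp only [ContinuousMultilinearMap.coe_coe] at h1
    rw [hdiag] at h1
    have h2 := congrArg norm h1
    rw [norm_mul, RCLike.norm_natCast, RCLike.norm_ofReal, abs_of_nonneg hS0] at h2
    have h3 : (Fintype.card (Fin k → Fin n → ℤˣ) : ℝ) * S
        ≤ (Fintype.card (Fin k → Fin n → ℤˣ) : ℝ) * (‖T‖ * (S ^ (1 / p)) ^ (k + 1)) := by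
      rw [← h2]
      refine (norm_sum_le_of_le (n := fun _ => ‖T‖ * (S ^ (1 / p)) ^ (k + 1)) _
        fun ε _ => ?_).trans_eq ?_
      · refine (T.le_opNorm _).trans (mul_le_mul_of_nonneg_left ?_ (norm_nonneg _))
        refine (Finset.prod_le_prod (fun _ _ => norm_nonneg _) fun l _ => hnorm ε l).trans_eq ?_
        simp
      · simp
    exact le_of_mul_le_mul_left h3 (by exact_mod_cast Fintype.card_pos)
  rcases hS0.eq_or_lt with h0 | hpos
  · rw [← h0, Real.zero_rpow (by positivity)]
    exact norm_nonneg _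
  · have h4 : (S ^ (1 / p)) ^ (k + 1) = S ^ (M / p) := by
      rw [← Real.rpow_natCast, ← Real.rpow_mul hS0, ← hM]
      congr 1
      ring
    have h5 : (p - M) / p = 1 - M / p := by
      field_simp
    rw [h5, Real.rpow_sub hpos, Real.rpow_one, div_le_iff₀ (by positivity), ← h4]
    exact hmain
end

section
/- (Optimality of Zalduendo's exponent) Let m ≥ 2 be an integer, let p be a real number with p > m, and let r be a real number with 1 ≤ r < p/(p−m). Then there is no constant C > 0 such that for every positive integer n and every continuous m-linear form T : ℓ_p^n × ⋯ × ℓ_p^n → 𝕂 one has (∑_{j=1}^n |T(e_j, …, e_j)|^r)^{1/r} ≤ C · ‖T‖. -/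
/-!
The diagonal form `T(x⁽¹⁾, …, x⁽ᵐ⁾) = ∑ j, ∏ i, x⁽ⁱ⁾ j` on `ℓ_p^n` defeats every constant. It has
`T(e_j, …, e_j) = 1` for all `j`, so the left-hand side of the inequality is `n ^ (1 / r)`, whereas
Hölder's inequality with the `m` exponents `p` and the remaining weight `1 - m / p` on the constant
function `1` gives `‖T‖ ≤ n ^ (1 - m / p)` (`diagForm_norm_le`). Since `r < p / (p - m)` means
`1 - m / p < 1 / r`, the quotient `n ^ (1 / r - (1 - m / p))` is unbounded in `n`.
-/

/-- Hölder's inequality for `m` vectors of `ℓ_p` norm at most one, with the weight `1 - m / p` put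
on the constant `1 / n`; it is the weighted AM-GM inequality summed over the coordinates. -/
theorem sum_prod_le_of_normalized {m n : ℕ} (hn : 0 < n) {p : ℝ} (hp0 : 0 < p) (hp : (m : ℝ) < p)
    (b : Fin m → Fin n → ℝ) (hb : ∀ i j, 0 ≤ b i j) (hb1 : ∀ i, ∑ j, b i j ^ p ≤ 1) :
    ∑ j, ∏ i, b i j ≤ (n : ℝ) ^ (1 - m / p) := by
  have hn' : (0 : ℝ) < n := by exact_mod_cast hn
  have hw : 0 ≤ 1 - (m : ℝ) / p := by
    rw [sub_nonneg, div_le_one hp0]; exact hp.le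
  have key : ∀ j, (1 / (n : ℝ)) ^ (1 - m / p) * ∏ i, b i j
      ≤ (1 - m / p) * (1 / n) + ∑ i, 1 / p * b i j ^ p := by
    intro j
    have h := Real.geom_mean_le_arith_mean_weighted (Finset.univ : Finset (Option (Fin m)))
      (fun o => o.elim (1 - (m : ℝ) / p) (fun _ => 1 / p))
      (fun o => o.elim (1 / (n : ℝ)) (fun i => b i j ^ p)) ?_ ?_ ?_
    · simp only [Fintype.prod_option, Fintype.sum_option, Option.elim] at h
      convert h using 3 with i
      rw [← Real.rpow_mul (hb i j), mul_one_div_cancel hp0.ne', Real.rpow_one]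
    · rintro (_ | i) _
      · exact hw
      · simp only [Option.elim]; positivity
    · simp [Fintype.sum_option, div_eq_mul_inv]
    · rintro (_ | i) _
      · simp only [Option.elim]; positivity
      · exact Real.rpow_nonneg (hb i j) _
  have hsum := Finset.sum_le_sum fun j (_ : j ∈ Finset.univ) => key j
  rw [← Finset.mul_sum, Finset.sum_add_distrib, Finset.sum_comm] at hsum
  have h2 : ∑ i, ∑ j, 1 / p * b i j ^ p ≤ ∑ _i : Fin m, 1 / p := by
    refine Finset.sum_le_sum fun i _ => ?_
    rw [← Finset.mul_sum]
    exact mul_le_of_le_one_right (by positivity) (hb1 i)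
  have h3 : (1 / (n : ℝ)) ^ (1 - m / p) * ∑ j, ∏ i, b i j ≤ 1 := by
    refine hsum.trans ((add_le_add_right h2 _).trans (le_of_eq ?_))
    simp only [Finset.sum_const, Finset.card_univ, Fintype.card_fin, nsmul_eq_mul]
    field_simp
    ring
  rw [one_div, Real.inv_rpow hn'.le, inv_mul_le_iff₀ (by positivity), mul_one] at h3
  exact h3

/-- The diagonal form `(x⁽¹⁾, …, x⁽ᵐ⁾) ↦ ∑ j, ∏ i, x⁽ⁱ⁾ j` on `ℓ_p^n`. -/
noncomputable def diagForm (𝕂 : Type*) [RCLike 𝕂] (m n : ℕ) (q : ENNReal) [Fact (1 ≤ q)] :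
    ContinuousMultilinearMap 𝕂 (fun _ : Fin m => PiLp q (fun _ : Fin n => 𝕂)) 𝕂 :=
  ∑ j : Fin n, (ContinuousMultilinearMap.mkPiAlgebra 𝕂 (Fin m) 𝕂).compContinuousLinearMap
    fun _ => PiLp.proj (𝕜 := 𝕂) q (fun _ : Fin n => 𝕂) j

theorem diagForm_apply {𝕂 : Type*} [RCLike 𝕂] (m n : ℕ) (q : ENNReal) [Fact (1 ≤ q)]
    (x : Fin m → PiLp q (fun _ : Fin n => 𝕂)) :
    diagForm 𝕂 m n q x = ∑ j, ∏ i, x i j := by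
  simp [diagForm]

theorem diagForm_norm_le {𝕂 : Type*} [RCLike 𝕂] (m n : ℕ) (hn : 0 < n) {p : ℝ} (hp0 : 0 < p)
    (hp : (m : ℝ) < p) [Fact (1 ≤ ENNReal.ofReal p)] :
    ‖diagForm 𝕂 m n (ENNReal.ofReal p)‖ ≤ (n : ℝ) ^ (1 - m / p) := by
  refine ContinuousMultilinearMap.opNorm_le_bound (by positivity) fun x => ?_
  rw [diagForm_apply]
  by_cases hx : ∃ i, x i = 0
  · obtain ⟨i, hi⟩ := hx
    have h0 : ∀ j, ∏ i, x i j = 0 := fun j =>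
      Finset.prod_eq_zero (Finset.mem_univ i) (by simp [hi])
    simp only [h0, Finset.sum_const_zero, norm_zero]
    positivity
  push Not at hx
  have hN : ∀ i, 0 < ‖x i‖ := fun i => norm_pos_iff.2 (hx i)
  have hpow : ∀ i, ∑ j, ‖x i j‖ ^ p = ‖x i‖ ^ p := by
    intro i
    have ht : (ENNReal.ofReal p).toReal = p := ENNReal.toReal_ofReal hp0.le
    rw [PiLp.norm_eq_sum (by rw [ht]; exact hp0), ht, ← Real.rpow_mul (by positivity),
      one_div_mul_cancel hp0.ne', Real.rpow_one]
  have h := sum_prod_le_of_normalized hn hp0 hp (fun i j => ‖x i j‖ / ‖x i‖)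
    (fun i j => by positivity) (fun i => by
      simp_rw [Real.div_rpow (norm_nonneg _) (norm_nonneg _), ← Finset.sum_div]
      rw [hpow, div_self (Real.rpow_pos_of_pos (hN i) p).ne'])
  simp_rw [Finset.prod_div_distrib, ← Finset.sum_div] at h
  rw [div_le_iff₀ (Finset.prod_pos fun i _ => hN i)] at h
  refine (norm_sum_le _ _).trans ?_
  simpa only [norm_prod] using h


/-- Optimality of Zalduendo's exponent: For `m ≥ 2`, `p > m` and
`1 ≤ r < p/(p−m)`, there is no constant `C > 0` such that for every `n` and every
continuous `m`-linear form `T : ℓ_p^n × ⋯ × ℓ_p^n → 𝕂` one has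
`(∑_{j=1}^n |T(e_j,…,e_j)|^r)^{1/r} ≤ C · ‖T‖`. -/
theorem stmt_5 {𝕂 : Type*} [RCLike 𝕂] (m : ℕ) (hm : 2 ≤ m) (p r : ℝ)
    (hp : (m : ℝ) < p) (hr1 : 1 ≤ r) (hr2 : r < p / (p - (m : ℝ)))
    [Fact (1 ≤ ENNReal.ofReal p)] :
    ¬ ∃ C : ℝ, 0 < C ∧ ∀ (n : ℕ), 0 < n →
      ∀ T : ContinuousMultilinearMap 𝕂
        (fun _ : Fin m => PiLp (ENNReal.ofReal p) (fun _ : Fin n => 𝕂)) 𝕂,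
      (∑ j : Fin n,
          ‖T (fun _ => (WithLp.equiv (ENNReal.ofReal p) (Fin n → 𝕂)).symm (Pi.single j 1))‖ ^ r)
          ^ (1 / r)
        ≤ C * ‖T‖ := by
  rintro ⟨C, hCpos, hC⟩
  have hp0 : 0 < p := (Nat.cast_nonneg m).trans_lt hp
  have hexp : 0 < 1 / r - (1 - m / p) := by
    have hr0 : 0 < r := by linarith
    rw [lt_div_iff₀ (sub_pos.2 hp)] at hr2
    have h : 1 / r - (1 - m / p) = (p - r * (p - m)) / (r * p) := by
      field_simp
    rw [h]
    exact div_pos (by linarith) (by positivity)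
  -- for large `n` the ratio `n ^ (1 / r) / n ^ (1 - m / p)` exceeds `C`
  obtain ⟨n, hn, hnC⟩ := (((tendsto_rpow_atTop hexp).comp tendsto_natCast_atTop_atTop
    ).eventually_gt_atTop C |>.and (Filter.eventually_gt_atTop 0)).exists.imp
    fun _ h => And.symm h
  have hn' : (0 : ℝ) < n := by exact_mod_cast hn
  have hm0 : m ≠ 0 := by omega
  have hC0 := hC n hn (diagForm 𝕂 m n (ENNReal.ofReal p))
  have hone : ∀ j : Fin n, diagForm 𝕂 m n (ENNReal.ofReal p)
      (fun _ => (WithLp.equiv (ENNReal.ofReal p) (Fin n → 𝕂)).symm (Pi.single j 1)) = 1 := by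
    intro j
    rw [diagForm_apply, Finset.sum_eq_single j]
    · simp
    · intro k _ hk
      simp [hk, hm0]
    · simp
  simp only [hone, norm_one, Real.one_rpow, Finset.sum_const, Finset.card_univ, Fintype.card_fin,
    nsmul_eq_mul, mul_one] at hC0
  have hpos : 0 < (n : ℝ) ^ (1 - m / p) := by positivity
  have hlt : C * (n : ℝ) ^ (1 - m / p) < (n : ℝ) ^ (1 / r) := by
    rw [← lt_div_iff₀ hpos, ← Real.rpow_sub hn']
    exact hnC
  have := mul_le_mul_of_nonneg_left (diagForm_norm_le (𝕂 := 𝕂) m n hn hp0 hp) hCpos.le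
  linarith
end

section
/- Let m and n be positive integers, let p_1, …, p_m ≥ 1 be real numbers with 1/p_1 + ⋯ + 1/p_m ≤ 1, and let s > 0 be a real number. Then for every continuous m-linear form A : ℓ_{p_1}^n × ⋯ × ℓ_{p_m}^n → 𝕂 one has (∑_{j=1}^n |A(e_j, …, e_j)|^s)^{1/s} ≤ n^{max{1/p_1 + ⋯ + 1/p_m + 1/s − 1, 0}} · ‖A‖. -/
/-!
Write `a j = A (e_j, …, e_j)` and `σ = ∑ 1 / p i`. The off-diagonal coefficients of `A` are removed
by averaging: for a random choice of signs `ε i j` with `∏ i, ε i j = 1` for every `j`, otherwise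
independent, the mean of `A (ε 1 x 1, …, ε m x m)` is `∑ j, (∏ i, x i j) * a j`, and changing signs
does not change any `ℓ_p` norm. Hence `‖∑ j, (∏ i, x i j) * a j‖ ≤ ‖A‖ * ∏ i, ‖x i‖`
(`norm_diag_le`).

If `σ < 1`, put `r = 1 / (1 - σ)` and test this with `x i j = |a j| ^ (r / p i)` (one factor being
multiplied by the conjugate phase of `a j`). With `S = ∑ j, |a j| ^ r` this reads `S ≤ ‖A‖ * S ^ σ`, that is
`‖a‖_r ≤ ‖A‖` (`sum_rpow_le_of_test`). Comparison of the `ℓ_s` and `ℓ_r` norms on `𝕂^n` then gives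
the claim, the factor `n ^ (1 / s - 1 / r)` appearing exactly when `s < r`. If `σ = 1`, the bound
`|a j| ≤ ‖A‖` suffices.
-/

/-- Signs `ε i j` whose product over `i` is `1` for each `j`: rows `1, …, k` are the free
parameters `δ`, and row `0` is their product. -/
def diagSign {k n : ℕ} (δ : Fin k → Fin n → ℤˣ) : Fin (k + 1) → Fin n → ℤˣ :=
  Fin.cons (fun j => ∏ i, δ i j) δ

/-- Orthogonality of the Rademacher functions `δ ↦ δ a` and `δ ↦ δ b`. -/
lemma sum_sign_mul_sign {𝕂 : Type*} [RCLike 𝕂] {n : ℕ} (a b : Fin n) (h : a ≠ b) :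
    ∑ δ : Fin n → ℤˣ, ((δ a : ℤ) : 𝕂) * ((δ b : ℤ) : 𝕂) = 0 := by
  -- Flipping the sign at `a` is a bijection which negates the summand.
  have h1 : ∑ δ : Fin n → ℤˣ, ((δ a : ℤ) : 𝕂) * ((δ b : ℤ) : 𝕂)
      = ∑ δ : Fin n → ℤˣ, -(((δ a : ℤ) : 𝕂) * ((δ b : ℤ) : 𝕂)) := by
    refine Fintype.sum_equiv (Equiv.mulLeft (Pi.mulSingle a (-1 : ℤˣ))) _ _ ?_
    intro δ
    simp [Pi.mulSingle_eq_of_ne h.symm]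
  rw [Finset.sum_neg_distrib] at h1
  exact self_eq_neg.mp h1

lemma sum_diagSign {𝕂 : Type*} [RCLike 𝕂] {k n : ℕ} (j : Fin (k + 1) → Fin n) :
    ∑ δ : Fin k → Fin n → ℤˣ, ∏ i, ((diagSign δ i (j i) : ℤ) : 𝕂)
      = if ∀ i, j i = j 0 then (Fintype.card (Fin k → Fin n → ℤˣ) : 𝕂) else 0 := by
  have h0 : ∀ δ : Fin k → Fin n → ℤˣ, ∏ i, ((diagSign δ i (j i) : ℤ) : 𝕂)
      = ∏ i : Fin k, ((δ i (j 0) : ℤ) : 𝕂) * ((δ i (j i.succ) : ℤ) : 𝕂) := by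
    intro δ
    rw [Fin.prod_univ_succ, Finset.prod_mul_distrib]
    simp [diagSign, Units.coe_prod]
  simp_rw [h0]
  split_ifs with hj
  · have h1 : ∀ u : ℤˣ, ((u : ℤ) : 𝕂) * ((u : ℤ) : 𝕂) = 1 := by
      intro u
      rcases Int.units_eq_one_or u with rfl | rfl <;> simp
    simp [hj, h1]
  · push Not at hj
    obtain ⟨i, hi⟩ := hj
    obtain ⟨i', rfl⟩ := Fin.exists_succ_eq.mpr (fun h : i = 0 => hi (by rw [h]))
    rw [← Fintype.prod_sum (fun (i : Fin k) (d : Fin n → ℤˣ) =>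
      ((d (j 0) : ℤ) : 𝕂) * ((d (j i.succ) : ℤ) : 𝕂))]
    exact Finset.prod_eq_zero (Finset.mem_univ i') (sum_sign_mul_sign _ _ (Ne.symm hi))

/-- Averaging an array over the signs `diagSign δ` keeps precisely its diagonal. -/
lemma sum_diagSign_mul {𝕂 : Type*} [RCLike 𝕂] {k n : ℕ} (c : (Fin (k + 1) → Fin n) → 𝕂) :
    ∑ δ : Fin k → Fin n → ℤˣ, ∑ j, (∏ i, ((diagSign δ i (j i) : ℤ) : 𝕂)) * c j
      = (Fintype.card (Fin k → Fin n → ℤˣ) : 𝕂) * ∑ a, c (fun _ => a) := by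
  rw [Finset.sum_comm]
  simp_rw [← Finset.sum_mul, sum_diagSign, ite_mul, zero_mul]
  rw [← Finset.sum_filter, ← Finset.mul_sum]
  congr 1
  symm
  refine Finset.sum_bij (fun a _ => fun _ => a) ?_ ?_ ?_ ?_
  · simp
  · intro a _ b _ h
    exact congrFun h 0
  · intro j hj
    refine ⟨j 0, Finset.mem_univ _, ?_⟩
    funext i
    exact ((Finset.mem_filter.mp hj).2 i).symm
  · simp

/-- The diagonal part of a multilinear form on `ℓ_p` spaces is bounded by the norm of the form. -/
lemma norm_diag_le {𝕂 : Type*} [RCLike 𝕂] {k n : ℕ}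
    (p : Fin (k + 1) → ℝ) (hp : ∀ i, 1 ≤ p i) [∀ i, Fact (1 ≤ ENNReal.ofReal (p i))]
    (A : ContinuousMultilinearMap 𝕂
      (fun i : Fin (k + 1) => PiLp (ENNReal.ofReal (p i)) (fun _ : Fin n => 𝕂)) 𝕂)
    (x : Fin (k + 1) → Fin n → 𝕂) :
    ‖∑ a, (∏ i, x i a) *
        A (fun i => (WithLp.equiv (ENNReal.ofReal (p i)) (Fin n → 𝕂)).symm (Pi.single a 1))‖
      ≤ ‖A‖ * ∏ i, (∑ a, ‖x i a‖ ^ p i) ^ (1 / p i) := by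
  set C : ℝ := ‖A‖ * ∏ i, (∑ a, ‖x i a‖ ^ p i) ^ (1 / p i) with hC
  set c : (Fin (k + 1) → Fin n) → 𝕂 := fun j =>
    A (fun i => (WithLp.equiv (ENNReal.ofReal (p i)) (Fin n → 𝕂)).symm (Pi.single (j i) 1)) with hc
  have hexp : ∀ y : Fin (k + 1) → Fin n → 𝕂,
      A (fun i => WithLp.toLp (ENNReal.ofReal (p i)) (y i)) = ∑ j, (∏ i, y i (j i)) * c j := by
    intro y
    have h1 : (fun i => WithLp.toLp (ENNReal.ofReal (p i)) (y i)) = fun i => ∑ a : Fin n,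
        y i a • (WithLp.equiv (ENNReal.ofReal (p i)) (Fin n → 𝕂)).symm (Pi.single a 1) := by
      funext i
      ext b
      simp [Pi.single_apply]
    rw [h1, ContinuousMultilinearMap.map_sum]
    refine Finset.sum_congr rfl fun j _ => ?_
    rw [ContinuousMultilinearMap.map_smul_univ, smul_eq_mul]
  have hsgn : ∀ δ : Fin k → Fin n → ℤˣ,
      ‖∑ j, (∏ i, ((diagSign δ i (j i) : ℤ) : 𝕂)) * ((∏ i, x i (j i)) * c j)‖ ≤ C := by
    intro δ
    have h1 := hexp (fun i a => ((diagSign δ i a : ℤ) : 𝕂) * x i a)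
    simp_rw [Finset.prod_mul_distrib, mul_assoc] at h1
    rw [← h1]
    refine (A.le_opNorm _).trans (le_of_eq ?_)
    rw [hC]
    congr 1
    refine Finset.prod_congr rfl fun i _ => ?_
    have hpi : 0 < p i := lt_of_lt_of_le one_pos (hp i)
    rw [PiLp.norm_eq_sum (by rw [ENNReal.toReal_ofReal hpi.le]; exact hpi),
      ENNReal.toReal_ofReal hpi.le]
    congr 1
    refine Finset.sum_congr rfl fun a _ => ?_
    rcases Int.units_eq_one_or (diagSign δ i a) with h | h <;> simp [h]
  have havg := sum_diagSign_mul (𝕂 := 𝕂) (fun j => (∏ i, x i (j i)) * c j)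
  have hN : (0 : ℝ) < Fintype.card (Fin k → Fin n → ℤˣ) := by
    exact_mod_cast Fintype.card_pos
  have h2 : (Fintype.card (Fin k → Fin n → ℤˣ) : ℝ) * ‖∑ a, (∏ i, x i a) * c (fun _ => a)‖
      ≤ Fintype.card (Fin k → Fin n → ℤˣ) * C := by
    calc _ = ‖(Fintype.card (Fin k → Fin n → ℤˣ) : 𝕂) * ∑ a, (∏ i, x i a) * c (fun _ => a)‖ := by
            rw [norm_mul, RCLike.norm_natCast]
      _ ≤ _ := by
            rw [← havg]
            refine (norm_sum_le _ _).trans ((Finset.sum_le_sum fun δ _ => hsgn δ).trans ?_)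
            simp
  exact le_of_mul_le_mul_left h2 hN

/-- The extremal case of Hölder's inequality: testing a diagonal form on powers of its own
coefficients bounds their `ℓ_r` norm, where `1 / r = 1 - ∑ 1 / p i`. -/
lemma sum_rpow_le_of_test {𝕂 : Type*} [RCLike 𝕂] {k n : ℕ}
    (p : Fin (k + 1) → ℝ) (hp : ∀ i, 1 ≤ p i) (a : Fin n → 𝕂) (M r : ℝ) (hM : 0 ≤ M) (hr : 0 < r)
    (hσ : ∑ i, 1 / p i = 1 - 1 / r)
    (H : ∀ x : Fin (k + 1) → Fin n → 𝕂,
      ‖∑ j, (∏ i, x i j) * a j‖ ≤ M * ∏ i, (∑ j, ‖x i j‖ ^ p i) ^ (1 / p i)) :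
    ∑ j, ‖a j‖ ^ r ≤ M ^ r := by
  set S : ℝ := ∑ j, ‖a j‖ ^ r with hS
  have hS0 : 0 ≤ S := Finset.sum_nonneg fun j _ => by positivity
  rcases hS0.eq_or_lt with h0 | hSpos
  · rw [← h0]; positivity
  -- `u j` is the conjugate of the phase of `a j`.
  have hu : ∀ j, ∃ u : 𝕂, ‖u‖ = 1 ∧ u * a j = (‖a j‖ : 𝕂) := by
    intro j
    by_cases h : a j = 0
    · exact ⟨1, by simp, by simp [h]⟩
    · have hn : ((‖a j‖ : ℝ) : 𝕂) ≠ 0 := by simpa using h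
      refine ⟨(‖a j‖ : 𝕂) / a j, ?_, div_mul_cancel₀ _ h⟩
      have : ‖a j‖ ≠ 0 := by simpa using h
      simp [this]
  choose u hu1 hu2 using hu
  have h1 := H (fun i j => (if i = 0 then u j else 1) * ((‖a j‖ ^ (r / p i) : ℝ) : 𝕂))
  have hprod : ∀ j, (∏ i : Fin (k + 1),
      (if i = 0 then u j else 1) * ((‖a j‖ ^ (r / p i) : ℝ) : 𝕂)) * a j
      = ((‖a j‖ ^ r : ℝ) : 𝕂) := by
    intro j
    rw [Finset.prod_mul_distrib, Finset.prod_ite_eq' Finset.univ 0 (fun _ => u j),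
      if_pos (Finset.mem_univ _), ← RCLike.ofReal_prod, mul_right_comm, hu2, ← RCLike.ofReal_mul]
    congr 1
    rcases (norm_nonneg (a j)).eq_or_lt with h | h
    · rw [← h, zero_mul, Real.zero_rpow hr.ne']
    · rw [← Real.rpow_sum_of_pos h]
      nth_rewrite 1 [← Real.rpow_one ‖a j‖]
      rw [← Real.rpow_add h]
      congr 1
      have : ∑ i, r / p i = r * ∑ i, 1 / p i := by
        rw [Finset.mul_sum]
        exact Finset.sum_congr rfl fun i _ => by ring
      rw [this, hσ]
      field_simp
      ring
  have hnorm : ∀ i : Fin (k + 1), ∑ j, ‖(if i = 0 then u j else 1) *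
      ((‖a j‖ ^ (r / p i) : ℝ) : 𝕂)‖ ^ p i = S := by
    intro i
    refine Finset.sum_congr rfl fun j _ => ?_
    have hpi : p i ≠ 0 := (lt_of_lt_of_le one_pos (hp i)).ne'
    have : ‖(if i = 0 then u j else 1 : 𝕂)‖ = 1 := by split_ifs <;> simp [hu1]
    rw [norm_mul, this, one_mul, RCLike.norm_ofReal, abs_of_nonneg (by positivity),
      ← Real.rpow_mul (norm_nonneg _), div_mul_cancel₀ _ hpi]
  simp_rw [hprod, hnorm] at h1
  rw [← RCLike.ofReal_sum, RCLike.norm_ofReal, abs_of_nonneg hS0,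
    ← Real.rpow_sum_of_pos hSpos, hσ, Real.rpow_sub hSpos, Real.rpow_one] at h1
  have hSr : 0 < S ^ (1 / r) := by positivity
  have h2 : S ^ (1 / r) ≤ M := by
    have h3 : S * S ^ (1 / r) ≤ S * M := by
      rw [← mul_div_assoc, le_div_iff₀ hSr] at h1
      linarith
    exact le_of_mul_le_mul_left h3 hSpos
  calc S = (S ^ (1 / r)) ^ r := by
        rw [← Real.rpow_mul hS0, one_div_mul_cancel hr.ne', Real.rpow_one]
    _ ≤ M ^ r := Real.rpow_le_rpow hSr.le h2 hr.le

/-- For positive integers `m, n`, reals `p_1,…,p_m ≥ 1` with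
`1/p_1 + ⋯ + 1/p_m ≤ 1`, `s > 0`, and every continuous `m`-linear form
`A : ℓ_{p_1}^n × ⋯ × ℓ_{p_m}^n → 𝕂`,
`(∑_{j=1}^n |A(e_j,…,e_j)|^s)^{1/s} ≤ n^{max{1/p_1 + ⋯ + 1/p_m + 1/s − 1, 0}} · ‖A‖`. -/
theorem stmt_10 {𝕂 : Type*} [RCLike 𝕂] (m n : ℕ) (hm : 0 < m) (hn : 0 < n)
    (p : Fin m → ℝ) (hp : ∀ i, 1 ≤ p i) [∀ i, Fact (1 ≤ ENNReal.ofReal (p i))]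
    (hsum : ∑ i : Fin m, 1 / p i ≤ 1)
    (s : ℝ) (hs : 0 < s)
    (A : ContinuousMultilinearMap 𝕂
      (fun i : Fin m => PiLp (ENNReal.ofReal (p i)) (fun _ : Fin n => 𝕂)) 𝕂) :
    (∑ j : Fin n,
        ‖A (fun i => (WithLp.equiv (ENNReal.ofReal (p i)) (Fin n → 𝕂)).symm (Pi.single j 1))‖ ^ s)
        ^ (1 / s)
      ≤ (n : ℝ) ^ max (∑ i : Fin m, 1 / p i + 1 / s - 1) 0 * ‖A‖ := by
  obtain ⟨k, rfl⟩ : ∃ k, m = k + 1 := ⟨m - 1, by omega⟩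
  have hn' : (0 : ℝ) < n := by exact_mod_cast hn
  have H := norm_diag_le p hp A
  set a : Fin n → 𝕂 := fun j =>
    A (fun i => (WithLp.equiv (ENNReal.ofReal (p i)) (Fin n → 𝕂)).symm (Pi.single j 1)) with ha
  have hM : 0 ≤ ‖A‖ := norm_nonneg A
  set M := ‖A‖
  have hsup : ∀ j, ‖a j‖ ≤ M := by
    intro j
    refine (A.le_opNorm _).trans (le_of_eq ?_)
    simp [M]
  have hT0 : 0 ≤ ∑ j, ‖a j‖ ^ s := Finset.sum_nonneg fun j _ => by positivity
  -- It suffices to prove the `s`-th power of the inequality.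
  have key : ∀ e : ℝ, ∑ j, ‖a j‖ ^ s ≤ (n : ℝ) ^ (e * s) * M ^ s →
      (∑ j, ‖a j‖ ^ s) ^ (1 / s) ≤ (n : ℝ) ^ e * M := by
    intro e he
    calc _ ≤ ((n : ℝ) ^ (e * s) * M ^ s) ^ (1 / s) :=
          Real.rpow_le_rpow hT0 he (by positivity)
      _ = _ := by
          rw [Real.mul_rpow (by positivity) (by positivity), ← Real.rpow_mul hn'.le,
            ← Real.rpow_mul hM, mul_assoc, mul_one_div_cancel hs.ne', mul_one, Real.rpow_one]
  apply key
  rcases hsum.eq_or_lt with hσ | hσ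
  · rw [hσ, max_eq_left (by simp [hs.le]), add_sub_cancel_left, one_div_mul_cancel hs.ne',
      Real.rpow_one]
    refine (Finset.sum_le_sum fun j _ =>
      Real.rpow_le_rpow (norm_nonneg _) (hsup j) hs.le).trans ?_
    simp
  · obtain ⟨r, hr, hrσ⟩ : ∃ r : ℝ, 0 < r ∧ ∑ i, 1 / p i = 1 - 1 / r :=
      ⟨1 / (1 - ∑ i, 1 / p i), one_div_pos.mpr (by linarith), by rw [one_div_one_div]; ring⟩
    have hSr : ∑ j, ‖a j‖ ^ r ≤ M ^ r := sum_rpow_le_of_test p hp a M r hM hr hrσ H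
    rw [hrσ, show 1 - 1 / r + 1 / s - 1 = 1 / s - 1 / r by ring]
    rcases le_total r s with hrs | hsr
    · rw [max_eq_right (sub_nonpos.mpr (one_div_le_one_div_of_le hr hrs)), zero_mul,
        Real.rpow_zero, one_mul]
      have hsplit : ∀ t : ℝ, 0 ≤ t → t ^ s = t ^ (s - r) * t ^ r := by
        intro t ht
        rw [← Real.rpow_add_of_nonneg ht (by linarith) hr.le, sub_add_cancel]
      calc ∑ j, ‖a j‖ ^ s ≤ ∑ j, M ^ (s - r) * ‖a j‖ ^ r := by
            refine Finset.sum_le_sum fun j _ => ?_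
            rw [hsplit _ (norm_nonneg _)]
            exact mul_le_mul_of_nonneg_right
              (Real.rpow_le_rpow (norm_nonneg _) (hsup j) (by linarith)) (by positivity)
        _ ≤ M ^ (s - r) * M ^ r := by
            rw [← Finset.mul_sum]
            exact mul_le_mul_of_nonneg_left hSr (by positivity)
        _ = M ^ s := (hsplit M hM).symm
    · rw [max_eq_left (sub_nonneg.mpr (one_div_le_one_div_of_le hs hsr))]
      -- Power mean inequality with exponent `r / s` for the numbers `‖a j‖ ^ s`.
      have h1 := Real.rpow_sum_le_const_mul_sum_rpow Finset.univ (fun j => ‖a j‖ ^ s)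
        ((one_le_div hs).mpr hsr)
      have h2 : ∀ j, |‖a j‖ ^ s| = ‖a j‖ ^ s := fun j => abs_of_nonneg (by positivity)
      have h3 : ∀ j, (‖a j‖ ^ s) ^ (r / s) = ‖a j‖ ^ r := fun j => by
        rw [← Real.rpow_mul (norm_nonneg _), mul_div_cancel₀ _ hs.ne']
      simp_rw [h2, h3] at h1
      rw [Finset.card_univ, Fintype.card_fin] at h1
      have h4 : (∑ j, ‖a j‖ ^ s) ^ (r / s) ≤ (n : ℝ) ^ (r / s - 1) * M ^ r :=
        h1.trans (mul_le_mul_of_nonneg_left hSr (by positivity))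
      have h5 := Real.rpow_le_rpow (by positivity) h4 (div_pos hs hr).le
      rw [← Real.rpow_mul hT0, Real.mul_rpow (by positivity) (by positivity),
        ← Real.rpow_mul hn'.le, ← Real.rpow_mul hM, div_mul_div_cancel₀ hs.ne', div_self hr.ne',
        Real.rpow_one, mul_div_cancel₀ _ hr.ne'] at h5
      rwa [show (1 / s - 1 / r) * s = (r / s - 1) * (s / r) by field_simp]
end
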